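/- Let L be a finite lattice with minimum 0̂ and maximum 1̂, 0̂ ≠ 1̂, and let i₁, i₂ ≥ 1 and 0 ≤ k ≤ min{i₁, i₂} be integers. If 1̂ is an (i₁+i₂−k−1)-synor, then there exist an (i₁−1)-synor x and an (i₂−1)-synor y with x ∨ y = 1̂. -/

import Mathlib

open Finsupp

noncomputable section

variable (K : Type) [Field K]

section Core
variable (P : Type) [Preorder P]

/-- Order chains with `n` elements of the poset `P`, written as strictly
decreasing tuples `(x₀ > x₁ > ⋯ > x_{n-1})`. -/
def OChain (n : ℕ) : Type := {c : Fin n → P // StrictAnti c}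

/-- The chain group in "level" `n`: the `K`-vector space with basis the order chains with
`n` elements.  Level `n` corresponds to homological degree `n - 1`; in particular
`CGrp K P 0 ≅ K` is the reduced part `C̃₋₁`. -/
abbrev CGrp (n : ℕ) : Type := OChain P n →₀ K

/-- Deletion of the `k`-th entry of an order chain. -/
def odel {n : ℕ} (k : Fin (n + 1)) (c : OChain P (n + 1)) : OChain P n :=
  ⟨c.1 ∘ k.succAbove, c.2.comp_strictMono (Fin.strictMono_succAbove k)⟩

/-- The simplicial boundary map (of the reduced simplicial chain complex of the order
complex), from level `n+1` to level `n`. -/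
def cbdry (n : ℕ) : CGrp K P (n + 1) →ₗ[K] CGrp K P n :=
  Finsupp.lsum K fun c => ∑ k : Fin (n + 1), ((-1 : K) ^ (k : ℕ)) • Finsupp.lsingle (odel P k c)

/-- The cycles in level `n` (every level-0 chain, i.e. multiple of the empty chain,
is a cycle). -/
def cyclesAt : (n : ℕ) → Submodule K (CGrp K P n)
  | 0 => ⊤
  | (n + 1) => LinearMap.ker (cbdry K P n)

/-- The boundaries in level `n`. -/
def boundariesIn (n : ℕ) : Submodule K (CGrp K P n) :=
  LinearMap.range (cbdry K P n)

/-- `H̃_{n-1}(P) ≠ 0`: nontriviality of the reduced simplicial homology (with coefficients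
in `K`) of the order complex of `P` in degree `n - 1` (level `n`). -/
def RHomNontrivial (n : ℕ) : Prop := ¬ cyclesAt K P n ≤ boundariesIn K P n

end Core


/-- `x` is an `i`-synor of the finite lattice `L` (with minimum `0̂ = ⊥`):
`x ∈ L ∖ {0̂}` and the open interval `(0̂, x)` has nontrivial reduced homology
`H̃_{i-1}` (degree `i - 1`, i.e. level `i`). -/
def IsSynor (L : Type) [Lattice L] [OrderBot L] (i : ℕ) (x : L) : Prop :=
  x ≠ ⊥ ∧ RHomNontrivial K ↥(Set.Ioo (⊥ : L) x) i

/-!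
Write `0̂ = ⊥`, `1̂ = ⊤`, and let `C` be the augmented chain complex of the poset `L ∖ {0̂}`,
filtered by `L` through the largest element of a chain. For `p ≠ 0̂` the filtration step at `p` is a
cone with apex `p`, hence contractible, while the graded piece in degree `p` computes the reduced
homology of `(0̂, p)`, shifted by one. Two facts combine.

* Contracting the graded pieces without homology shows that, for each `n`, the identity of `C` is
  homotopic, without raising degrees, to a map sending the chains of length `n` into the filtration
  steps at the `(n - 1)`-synors.
* In the double complex `C ⊗ C` modulo the span of the `x ⊗ y` with `deg x ⊔ deg y ≠ 1̂`, columns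
  with `len x ≠ 0` and rows with `len y ≠ 0` are exact: contract the cone over `deg x ⊔ deg y` in
  one factor with the other factor fixed.

If `1̂` is a synor, it gives a nonzero class `z ⊗ (empty chain)` in this quotient. By exactness the
class can be moved along the zigzag to other bidegrees with the same sum, and both factors can be
deformed towards synors, without becoming zero. A nonzero class must contain a term `x ⊗ y` with
`deg x ⊔ deg y = 1̂`, and then the synors above `deg x` and `deg y` also have join `1̂`.
-/

section

variable {K}

section BasedMaps

variable {α β : Type*}

-- Without this shortcut, `rw [mul_sub]` does not unify the two additive structures on `α →₀ K`.
instance instRingEndFinsupp : Ring (Module.End K (α →₀ K)) := Module.End.instRing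

lemma map_mem_of_mem_supported {M : Type*} [AddCommMonoid M] [Module K M] {S : Set α}
    {Q : Submodule K M} {f : (α →₀ K) →ₗ[K] M} (hf : ∀ x ∈ S, f (single x 1) ∈ Q)
    {v : α →₀ K} (hv : v ∈ supported K K S) : f v ∈ Q := by
  rw [supported_eq_span_single] at hv
  suffices h : Submodule.span K ((fun x => single x (1 : K)) '' S) ≤ Q.comap f from h hv
  rw [Submodule.span_le]
  rintro _ ⟨x, hx, rfl⟩
  exact hf x hx

lemma map_eq_map_of_mem_supported {M : Type*} [AddCommMonoid M] [Module K M] {S : Set α}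
    {f g : (α →₀ K) →ₗ[K] M} (h : ∀ x ∈ S, f (single x 1) = g (single x 1)) {v : α →₀ K}
    (hv : v ∈ supported K K S) : f v = g v :=
  map_mem_of_mem_supported (Q := LinearMap.eqLocus f g) (f := LinearMap.id) h hv

lemma eq_zero_of_mem_supported {S T : Set α} {v : α →₀ K} (hS : v ∈ supported K K S)
    (hT : v ∈ supported K K T) (h : Disjoint S T) : v = 0 :=
  Submodule.disjoint_def.1 (disjoint_supported_supported h) v hS hT

/-- `f` sends each basis vector `x` to a combination of basis vectors `y` with `ρ x y`. -/
def Carries (ρ : α → β → Prop) (f : (α →₀ K) →ₗ[K] (β →₀ K)) : Prop :=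
  ∀ x, f (single x 1) ∈ supported K K {y | ρ x y}

namespace Carries

variable {ρ ρ' : α → β → Prop} {f g : (α →₀ K) →ₗ[K] (β →₀ K)}

lemma mono (hf : Carries ρ f) (h : ∀ x y, ρ x y → ρ' x y) : Carries ρ' f :=
  fun x => supported_mono (h x) (hf x)

lemma add (hf : Carries ρ f) (hg : Carries ρ g) : Carries ρ (f + g) :=
  fun x => add_mem (hf x) (hg x)

lemma sub (hf : Carries ρ f) (hg : Carries ρ g) : Carries ρ (f - g) :=
  fun x => sub_mem (hf x) (hg x)

lemma map_mem (hf : Carries ρ f) {S : Set α} {T : Set β} (h : ∀ x ∈ S, ∀ y, ρ x y → y ∈ T)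
    {v : α →₀ K} (hv : v ∈ supported K K S) : f v ∈ supported K K T :=
  map_mem_of_mem_supported (fun x hx => supported_mono (h x hx) (hf x)) hv

lemma mul {ρ σ τ : α → α → Prop} {f g : Module.End K (α →₀ K)} (hg : Carries σ g)
    (hf : Carries ρ f) (h : ∀ x y z, ρ x y → σ y z → τ x z) : Carries τ (g * f) :=
  fun x => hg.map_mem (fun y hy z => h x y z hy) (hf x)

lemma exists_mem_supported_map_eq {S : Set α} {T : Set β}
    (hf : Carries (fun x y => x ∈ S ↔ y ∈ T) f) {z : β →₀ K} (hz : z ∈ supported K K T)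
    {w : α →₀ K} (hw : z - f w ∈ supported K K Tᶜ) : ∃ w' ∈ supported K K S, f w' = z := by
  obtain ⟨v, hv, v', hv', rfl⟩ : ∃ v ∈ supported K K S, ∃ v' ∈ supported K K Sᶜ, v + v' = w :=
    Submodule.mem_sup.1 (by rw [← supported_union, Set.union_compl_self, supported_univ]; trivial)
  have on : f v ∈ supported K K T := hf.map_mem (fun x hx y h => h.1 hx) hv
  have off : f v' ∈ supported K K Tᶜ := hf.map_mem (S := Sᶜ) (fun x hx y h hy => hx (h.2 hy)) hv'
  refine ⟨v, hv, Eq.symm (sub_eq_zero.1 ?_)⟩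
  refine eq_zero_of_mem_supported (sub_mem hz on) ?_ disjoint_compl_right
  simpa [sub_add_eq_sub_sub] using add_mem hw off

lemma lmapDomain_mem_range_iff {α' β' : Type*} {i : α' → α} {j : β' → β}
    (hj : Function.Injective j) (hf : Carries (fun x y => x ∈ Set.range i ↔ y ∈ Set.range j) f)
    {g : (α' →₀ K) →ₗ[K] (β' →₀ K)}
    (hfg : ∀ w, f (lmapDomain K K i w) = lmapDomain K K j (g w)) {z : β' →₀ K} :
    lmapDomain K K j z ∈ LinearMap.range f ↔ z ∈ LinearMap.range g := by
  constructor
  · rintro ⟨w, hw⟩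
    have hz : lmapDomain K K j z ∈ supported K K (Set.range j) := by
      rw [← Set.image_univ, ← lmapDomain_supported]
      exact ⟨z, by simp, rfl⟩
    obtain ⟨w', hw', hfw⟩ := hf.exists_mem_supported_map_eq hz (w := w) (by simp [hw])
    rw [← Set.image_univ, ← lmapDomain_supported, supported_univ] at hw'
    obtain ⟨w, -, rfl⟩ := hw'
    exact ⟨w, mapDomain_injective hj ((hfg w).symm.trans hfw)⟩
  · rintro ⟨w, rfl⟩
    exact ⟨_, hfg w⟩

end Carries

open Classical in
/-- The part of `f` formed by its matrix coefficients at the pairs `(x, y)` with `ρ x y`. -/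
def relPart (ρ : α → β → Prop) (f : (α →₀ K) →ₗ[K] (β →₀ K)) : (α →₀ K) →ₗ[K] (β →₀ K) :=
  linearCombination K fun x => (f (single x 1)).filter (ρ x)

variable {ρ σ : α → β → Prop} {f : (α →₀ K) →ₗ[K] (β →₀ K)}

lemma relPart_single_apply_of_rel {x : α} {y : β} (h : ρ x y) :
    relPart ρ f (single x 1) y = f (single x 1) y := by
  simp [relPart, h]

lemma relPart_single_apply_of_not_rel {x : α} {y : β} (h : ¬ ρ x y) :
    relPart ρ f (single x 1) y = 0 := by
  simp [relPart, h]

lemma Carries.relPart (hf : Carries σ f) : Carries (fun x y => σ x y ∧ ρ x y) (relPart ρ f) := by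
  refine fun x => (mem_supported' _ _).2 fun y hy => ?_
  by_cases hρ : ρ x y
  · rw [relPart_single_apply_of_rel hρ]
    exact (mem_supported' _ _).1 (hf x) y fun hσ => hy ⟨hσ, hρ⟩
  · exact relPart_single_apply_of_not_rel hρ

lemma Carries.sub_relPart (hf : Carries σ f) :
    Carries (fun x y => σ x y ∧ ¬ ρ x y) (f - _root_.relPart ρ f) := by
  refine fun x => (mem_supported' _ _).2 fun y hy => ?_
  by_cases hρ : ρ x y
  · rw [LinearMap.sub_apply, Finsupp.sub_apply, relPart_single_apply_of_rel hρ, sub_self]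
  · rw [LinearMap.sub_apply, Finsupp.sub_apply, relPart_single_apply_of_not_rel hρ, sub_zero]
    exact (mem_supported' _ _).1 (hf x) y fun hσ => hy ⟨hσ, hρ⟩

lemma carries_true (f : (α →₀ K) →ₗ[K] (β →₀ K)) : Carries (fun _ _ => True) f :=
  fun _ => (mem_supported' _ _).2 fun _ hy => absurd trivial hy

end BasedMaps

section FilteredComplex

lemma exists_mul_mul_eq_self {V : Type*} [AddCommGroup V] [Module K V] (d : Module.End K V) :
    ∃ g : Module.End K V, d * g * d = d := by
  obtain ⟨s, hs⟩ := d.rangeRestrict.exists_rightInverse_of_surjective d.range_rangeRestrict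
  obtain ⟨g, hg⟩ := s.exists_extend
  refine ⟨g, LinearMap.ext fun x => ?_⟩
  have hgd : g (d x) = s (d.rangeRestrict x) := LinearMap.congr_fun hg (d.rangeRestrict x)
  rw [Module.End.mul_apply, Module.End.mul_apply, hgd]
  exact congrArg Subtype.val (LinearMap.congr_fun hs (d.rangeRestrict x))

variable (K) in
/-- A chain complex over `K` with a chosen basis `ι`, filtered by `L`. The homological grading
is recorded by `len`, so that the whole complex is the single module `ι →₀ K`, and the filtration
step at `p` is spanned by the basis vectors of degree at most `p`. -/
structure FilteredComplex (L : Type*) [PartialOrder L] where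
  ι : Type
  len : ι → ℕ
  deg : ι → L
  d : Module.End K (ι →₀ K)
  carries_d : Carries (fun x y => len y + 1 = len x ∧ deg y ≤ deg x) d
  d_mul_d : d * d = 0

namespace FilteredComplex

variable {L : Type*} [PartialOrder L] (C : FilteredComplex K L)

lemma d_d (v : C.ι →₀ K) : C.d (C.d v) = 0 :=
  LinearMap.congr_fun C.d_mul_d v

/-- The differential of the associated graded complex: the degree-preserving part of `d`. -/
def grD : Module.End K (C.ι →₀ K) := relPart (fun x y => C.deg y = C.deg x) C.d

lemma carries_grD : Carries (fun x y => C.len y + 1 = C.len x ∧ C.deg y = C.deg x) C.grD :=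
  C.carries_d.relPart.mono fun _ _ h => ⟨h.1.1, h.2⟩

lemma carries_d_sub_grD : Carries (fun x y => C.deg y < C.deg x) (C.d - C.grD) :=
  C.carries_d.sub_relPart.mono fun _ _ h => lt_of_le_of_ne h.1.2 h.2

lemma grD_mul_grD : C.grD * C.grD = 0 := by
  have lower : Carries (fun x y => C.deg y < C.deg x)
      (C.grD * (C.d - C.grD) + (C.d - C.grD) * C.d) :=
    (C.carries_grD.mul C.carries_d_sub_grD fun _ _ _ h h' => h'.2.trans_lt h).add
      (C.carries_d_sub_grD.mul C.carries_d fun _ _ _ h h' => h'.trans_le h.2)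
  have split : C.grD * C.grD =
      C.d * C.d - (C.grD * (C.d - C.grD) + (C.d - C.grD) * C.d) := by
    simp only [mul_sub, sub_mul]
    abel
  ext x : 2
  refine eq_zero_of_mem_supported (S := {y | C.deg y = C.deg x}) (T := {y | C.deg y < C.deg x})
    (C.carries_grD.mul C.carries_grD (fun _ _ _ h h' => h'.2.trans h.2) x) ?_
    (Set.disjoint_left.2 fun y h h' => h'.ne h)
  rw [split, C.d_mul_d, zero_sub]
  exact neg_mem (lower x)

lemma grD_single_eq {x : C.ι} {v : C.ι →₀ K} (hv : v ∈ supported K K {y | C.deg y = C.deg x})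
    (h : C.d (single x 1) - v ∈ supported K K {y | C.deg y < C.deg x}) :
    C.grD (single x 1) = v := by
  have on : C.grD (single x 1) - v ∈ supported K K {y | C.deg y = C.deg x} :=
    sub_mem (supported_mono (fun _ hy => hy.2) (C.carries_grD x)) hv
  have below : C.grD (single x 1) - v ∈ supported K K {y | C.deg y < C.deg x} := by
    simpa using sub_mem h (C.carries_d_sub_grD x)
  exact sub_eq_zero.1 (eq_zero_of_mem_supported on below
    (Set.disjoint_left.2 fun y hy hy' => hy'.ne hy))

/-- The associated graded complex of `C` has nonzero homology at level `n` in degree `p`. -/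
def GrHomologyNontrivial (n : ℕ) (p : L) : Prop :=
  ∃ z ∈ supported K K {x | C.len x = n ∧ C.deg x = p}, C.grD z = 0 ∧ z ∉ LinearMap.range C.grD

lemma exists_graded_inverse_grD : ∃ g : Module.End K (C.ι →₀ K),
    Carries (fun x y => C.len y = C.len x + 1 ∧ C.deg y = C.deg x) g ∧
      C.grD * g * C.grD = C.grD := by
  obtain ⟨g, hg⟩ := exists_mul_mul_eq_self C.grD
  set ρ : C.ι → C.ι → Prop := fun x y => C.len y = C.len x + 1 ∧ C.deg y = C.deg x
  have hρ : Carries ρ (relPart ρ g) := (carries_true g).relPart.mono fun _ _ h => h.2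
  have on : Carries (fun x y => C.len y + 1 = C.len x ∧ C.deg y = C.deg x)
      (C.grD * (relPart ρ g * C.grD)) :=
    C.carries_grD.mul (hρ.mul (τ := fun x y => C.len y = C.len x ∧ C.deg y = C.deg x)
      C.carries_grD (by grind)) (by grind)
  have off : Carries (fun x y => ¬ (C.len y + 1 = C.len x ∧ C.deg y = C.deg x))
      (C.grD * ((g - relPart ρ g) * C.grD)) :=
    C.carries_grD.mul ((carries_true g).sub_relPart.mul
      (τ := fun x y => ¬ (C.len y = C.len x ∧ C.deg y = C.deg x)) C.carries_grD (by grind))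
      (by grind)
  have split : C.grD - C.grD * (relPart ρ g * C.grD) =
      C.grD * ((g - relPart ρ g) * C.grD) := by
    rw [sub_mul, mul_sub, ← mul_assoc _ g, hg]
  refine ⟨relPart ρ g, hρ, Eq.symm (sub_eq_zero.1 ?_)⟩
  rw [mul_assoc]
  ext x : 2
  refine eq_zero_of_mem_supported (C.carries_grD.sub on x) ?_ disjoint_compl_right
  rw [split]
  exact off x

lemma exists_gr_contraction : ∃ k : Module.End K (C.ι →₀ K),
    Carries (fun x y => C.len y = C.len x + 1 ∧ C.deg y = C.deg x) k ∧
      ∀ x, ¬ C.GrHomologyNontrivial (C.len x) (C.deg x) →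
        (C.grD * k + k * C.grD) (single x 1) = single x 1 := by
  obtain ⟨g, hg, hgD⟩ := C.exists_graded_inverse_grD
  have hgg : Carries (fun x y => C.len y = C.len x + 1 ∧ C.deg y = C.deg x)
      (C.grD * (g * g)) :=
    C.carries_grD.mul (hg.mul (τ := fun x y => C.len y = C.len x + 2 ∧ C.deg y = C.deg x) hg
      (by grind)) (by grind)
  refine ⟨g - C.grD * (g * g), hg.sub hgg, fun x hx => ?_⟩
  have factor : C.grD * (g - C.grD * (g * g)) + (g - C.grD * (g * g)) * C.grD =
      1 - (1 - C.grD * g) * (1 - g * C.grD) := by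
    simp only [mul_sub, sub_mul, ← mul_assoc, C.grD_mul_grD, one_mul, mul_one, zero_mul]
    abel
  have hv : (1 - g * C.grD) (single x 1) ∈
      supported K K {y | C.len y = C.len x ∧ C.deg y = C.deg x} :=
    sub_mem (single_mem_supported K 1 ⟨rfl, rfl⟩)
      (hg.mul (τ := fun x y => C.len y = C.len x ∧ C.deg y = C.deg x) C.carries_grD
        (by grind) x)
  have hDv : C.grD ((1 - g * C.grD) (single x 1)) = 0 := by
    rw [← Module.End.mul_apply, mul_sub, mul_one, ← mul_assoc, hgD, sub_self, LinearMap.zero_apply]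
  obtain ⟨w, hw⟩ : (1 - g * C.grD) (single x 1) ∈ LinearMap.range C.grD := by
    by_contra h
    exact hx ⟨_, hv, hDv, h⟩
  have kill : (1 - C.grD * g) * C.grD = 0 := by rw [sub_mul, one_mul, hgD, sub_self]
  rw [factor, LinearMap.sub_apply, Module.End.mul_apply, ← hw, ← Module.End.mul_apply, kill]
  simp

variable {C} in
/-- `f` is homotopic to the identity through maps that do not raise the filtration degree. -/
def IsDeformation (f : Module.End K (C.ι →₀ K)) : Prop :=
  ∃ H, Carries (fun x y => C.len y = C.len x + 1 ∧ C.deg y ≤ C.deg x) H ∧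
    f = 1 - (C.d * H + H * C.d)

namespace IsDeformation

variable {C} {f g : Module.End K (C.ι →₀ K)}

lemma carries (hf : IsDeformation f) :
    Carries (fun x y => C.len y = C.len x ∧ C.deg y ≤ C.deg x) f := by
  obtain ⟨H, hH, rfl⟩ := hf
  refine Carries.sub (fun x => single_mem_supported K 1 ⟨rfl, le_rfl⟩) (.add ?_ ?_)
  · exact C.carries_d.mul hH (by grind)
  · exact hH.mul C.carries_d (by grind)

lemma commute_d (hf : IsDeformation f) : Commute f C.d := by
  obtain ⟨H, -, rfl⟩ := hf
  simp only [commute_iff_eq, mul_sub, sub_mul, mul_add, add_mul, mul_assoc, C.d_mul_d]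
  simp only [← mul_assoc, C.d_mul_d]
  simp

lemma one : IsDeformation (1 : Module.End K (C.ι →₀ K)) :=
  ⟨0, fun x => by simp, by simp⟩

lemma mul (hf : IsDeformation f) (hg : IsDeformation g) : IsDeformation (f * g) := by
  have hfd := hf.commute_d.eq
  have hfc := hf.carries
  obtain ⟨H, hH, hfH⟩ := hf
  obtain ⟨H', hH', rfl⟩ := hg
  refine ⟨H + f * H', hH.add (hfc.mul hH' fun x y z h h' =>
    ⟨h'.1.trans h.1, h'.2.trans h.2⟩), ?_⟩
  calc f * (1 - (C.d * H' + H' * C.d)) = f - (f * C.d * H' + f * H' * C.d) := by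
        simp only [mul_sub, mul_add, mul_one, mul_assoc]
    _ = 1 - (C.d * H + H * C.d) - (C.d * f * H' + f * H' * C.d) := by rw [hfd, ← hfH]
    _ = _ := by
        simp only [mul_add, add_mul, mul_assoc]
        abel

end IsDeformation

lemma exists_isDeformation_deg_lt (n : ℕ) : ∃ e : Module.End K (C.ι →₀ K), IsDeformation e ∧
    ∀ x, C.len x = n → ¬ C.GrHomologyNontrivial n (C.deg x) →
      e (single x 1) ∈ supported K K {y | C.deg y < C.deg x} := by
  obtain ⟨k, hk, hDk⟩ := C.exists_gr_contraction
  refine ⟨1 - (C.d * k + k * C.d), ⟨k, hk.mono fun x y h => ⟨h.1, h.2.le⟩, rfl⟩, ?_⟩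
  rintro x rfl hx
  have split : 1 - (C.d * k + k * C.d) = 1 - (C.grD * k + k * C.grD) -
      ((C.d - C.grD) * k + k * (C.d - C.grD)) := by
    simp only [mul_sub, sub_mul]
    abel
  rw [split, LinearMap.sub_apply, LinearMap.sub_apply, hDk x hx, Module.End.one_apply, sub_self,
    zero_sub]
  exact neg_mem (((C.carries_d_sub_grD.mul hk fun x y z h h' => h'.trans_eq h.2).add
    (hk.mul C.carries_d_sub_grD fun x y z h h' => h'.2.trans_lt h)) x)

lemma exists_isDeformation_of_strictMono {rank : L → ℕ} (hrank : StrictMono rank) (n m : ℕ) :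
    ∃ f : Module.End K (C.ι →₀ K), IsDeformation f ∧ ∀ x, C.len x = n →
      f (single x 1) ∈ supported K K {y |
        C.deg y ∈ lowerClosure {p | C.GrHomologyNontrivial n p} ∨
          rank (C.deg y) + m ≤ rank (C.deg x)} := by
  obtain ⟨e, he, hlt⟩ := C.exists_isDeformation_deg_lt n
  induction m with
  | zero => exact ⟨1, .one, fun x _ => single_mem_supported K 1 (.inr le_rfl)⟩
  | succ m ih =>
    obtain ⟨f, hf, hfU⟩ := ih
    refine ⟨f * e, hf.mul he, fun x hx => ?_⟩
    by_cases hp : C.GrHomologyNontrivial n (C.deg x)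
    · exact supported_mono (fun y hy => .inl ⟨_, hp, hy.2⟩) ((hf.mul he).carries x)
    · have hex : e (single x 1) ∈ supported K K {y | C.len y = n ∧ C.deg y < C.deg x} :=
        supported_mono (fun y hy => And.intro (hy.1.1.trans hx) hy.2)
          ((supported_inter _ _).ge ⟨he.carries x, hlt x hx hp⟩)
      refine map_mem_of_mem_supported (fun y hy => supported_mono ?_ (hfU y hy.1)) hex
      rintro z (hz | hz)
      · exact .inl hz
      · have := hrank hy.2
        exact .inr (by omega)

lemma exists_isDeformation [Finite L] (n : ℕ) : ∃ f : Module.End K (C.ι →₀ K),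
    IsDeformation f ∧ ∀ x, C.len x = n →
      f (single x 1) ∈
        supported K K {y | C.deg y ∈ lowerClosure {p | C.GrHomologyNontrivial n p}} := by
  have hrank : StrictMono fun p : L => (Set.Iio p).ncard :=
    fun p q h => Set.ncard_lt_ncard (Set.Iio_ssubset_Iio h) (Set.toFinite _)
  obtain ⟨f, hf, hfU⟩ := C.exists_isDeformation_of_strictMono hrank n (Nat.card L + 1)
  refine ⟨f, hf, fun x hx => supported_mono (fun y hy => hy.resolve_right fun h => ?_) (hfU x hx)⟩
  have : (Set.Iio (C.deg x)).ncard ≤ Nat.card L := Set.ncard_le_card _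
  omega

end FilteredComplex

end FilteredComplex

section TensorSpan

open TensorProduct

variable {α β : Type*} {R R' : α → β → Prop}

-- Without this shortcut, `sub_mem` and `sub_zero` do not find the additive group structure.
instance instAddCommGroupTensorFinsupp : AddCommGroup ((α →₀ K) ⊗[K] (β →₀ K)) :=
  TensorProduct.addCommGroup

/-- The span of the basis vectors `x ⊗ y` of the tensor product with `R x y`. -/
def tensorSpan (R : α → β → Prop) : Submodule K ((α →₀ K) ⊗[K] (β →₀ K)) :=
  Submodule.span K {t | ∃ x y, R x y ∧ single x 1 ⊗ₜ single y 1 = t}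

lemma map_mem_of_mem_tensorSpan {M : Type*} [AddCommMonoid M] [Module K M] {Q : Submodule K M}
    {f : (α →₀ K) ⊗[K] (β →₀ K) →ₗ[K] M}
    (hf : ∀ x y, R x y → f (single x 1 ⊗ₜ single y 1) ∈ Q) {u : (α →₀ K) ⊗[K] (β →₀ K)}
    (hu : u ∈ tensorSpan R) : f u ∈ Q := by
  suffices h : tensorSpan R ≤ Q.comap f from h hu
  refine Submodule.span_le.2 ?_
  rintro _ ⟨x, y, hxy, rfl⟩
  exact hf x y hxy

lemma tmul_mem_tensorSpan {S : Set α} {T : Set β} (h : ∀ x ∈ S, ∀ y ∈ T, R x y) {a : α →₀ K}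
    {b : β →₀ K} (ha : a ∈ supported K K S) (hb : b ∈ supported K K T) :
    a ⊗ₜ b ∈ tensorSpan R :=
  map_mem_of_mem_supported (f := (TensorProduct.mk K _ _).flip b) (Q := tensorSpan R)
    (fun x hx => map_mem_of_mem_supported (f := TensorProduct.mk K _ _ (single x 1))
      (Q := tensorSpan R)
      (fun y hy => Submodule.subset_span ⟨x, y, h x hx y hy, rfl⟩) hb) ha

lemma tensorSpan_mono (h : ∀ x y, R x y → R' x y) :
    (tensorSpan R : Submodule K ((α →₀ K) ⊗[K] (β →₀ K))) ≤ tensorSpan R' :=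
  Submodule.span_mono fun _ ⟨x, y, hxy, ht⟩ => ⟨x, y, h x y hxy, ht⟩

lemma Carries.rTensor_mem {ρ : α → α → Prop} {f : Module.End K (α →₀ K)} (hf : Carries ρ f)
    (h : ∀ x x' y, R x y → ρ x x' → R' x' y) {u : (α →₀ K) ⊗[K] (β →₀ K)}
    (hu : u ∈ tensorSpan R) : f.rTensor _ u ∈ tensorSpan R' := by
  refine map_mem_of_mem_tensorSpan (fun x y hxy => ?_) hu
  rw [LinearMap.rTensor_tmul]
  exact tmul_mem_tensorSpan (T := {y}) (fun x' hx' _ hy => hy ▸ h x x' y hxy hx') (hf x)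
    (single_mem_supported K 1 rfl)

lemma comm_mem_tensorSpan {u : (α →₀ K) ⊗[K] (β →₀ K)} (hu : u ∈ tensorSpan R) :
    TensorProduct.comm K _ _ u ∈ tensorSpan fun y x => R x y :=
  map_mem_of_mem_tensorSpan (f := (TensorProduct.comm K (α →₀ K) (β →₀ K)).toLinearMap)
    (Q := tensorSpan fun y x => R x y)
    (fun x y hxy => Submodule.subset_span ⟨y, x, hxy, rfl⟩) hu

lemma Carries.lTensor_mem {ρ : β → β → Prop} {f : Module.End K (β →₀ K)} (hf : Carries ρ f)
    (h : ∀ x y y', R x y → ρ y y' → R' x y') {u : (α →₀ K) ⊗[K] (β →₀ K)}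
    (hu : u ∈ tensorSpan R) : f.lTensor _ u ∈ tensorSpan R' := by
  rw [← LinearMap.comm_comp_rTensor_comp_comm_eq]
  exact comm_mem_tensorSpan (hf.rTensor_mem (fun y y' x => h x y y') (comm_mem_tensorSpan hu))

end TensorSpan

section ConeFilteredComplex

open TensorProduct

variable (K) in
/-- A filtered complex whose filtration steps above `⊥` are contractible, with a basis vector
`base` at the bottom. The model is the augmented chain complex of a poset, where the step at `p` is
a cone with apex `p`, and `base` is the empty chain. -/
structure ConeFilteredComplex (L : Type*) [PartialOrder L] [OrderBot L]
    extends FilteredComplex K L where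
  base : ι
  len_base : len base = 0
  deg_base : deg base = ⊥
  deg_ne_bot : ∀ x, len x ≠ 0 → deg x ≠ ⊥
  exists_cone : ∀ p ≠ ⊥, ∃ k : Module.End K (ι →₀ K),
    Carries (fun x y => len y = len x + 1 ∧ deg y ≤ p) k ∧
      ∀ x, deg x ≤ p → (d * k + k * d) (single x 1) = single x 1

namespace ConeFilteredComplex

lemma ne_bot_of_grHomologyNontrivial {L : Type*} [PartialOrder L] [OrderBot L]
    (C : ConeFilteredComplex K L) {n : ℕ} (hn : n ≠ 0) {p : L}
    (h : C.GrHomologyNontrivial n p) : p ≠ ⊥ := by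
  rintro rfl
  obtain ⟨z, hz, -, hne⟩ := h
  refine hne ?_
  have hempty : {x | C.len x = n ∧ C.deg x = ⊥} = ∅ :=
    Set.eq_empty_of_forall_notMem fun x ⟨hlen, hdeg⟩ => C.deg_ne_bot x (hlen ▸ hn) hdeg
  rw [hempty, supported_empty, Submodule.mem_bot] at hz
  exact hz ▸ zero_mem _

variable {L : Type*} [SemilatticeSup L]

section Contraction

variable [OrderBot L] (C : ConeFilteredComplex K L) {p : L}

lemma exists_coned_contraction (hp : p ≠ ⊥) {n : ℕ} {s : Module.End K (C.ι →₀ K)}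
    (hs : Carries (fun x y => C.len y = C.len x + 1 ∧ C.deg y ≤ C.deg x ⊔ p) s)
    (hds : ∀ x, C.len x < n → (C.d * s + s * C.d) (single x 1) = single x 1) {x : C.ι}
    (hx : C.len x = n) :
    ∃ v ∈ supported K K {y | C.len y = C.len x + 1 ∧ C.deg y ≤ C.deg x ⊔ p},
      C.d v + s (C.d (single x 1)) = single x 1 := by
  obtain ⟨k, hk, hdk⟩ := C.exists_cone (C.deg x ⊔ p) fun h => hp (eq_bot_mono le_sup_right h)
  set z := single x 1 - s (C.d (single x 1)) with hz
  have z_mem : z ∈ supported K K {y | C.len y = C.len x ∧ C.deg y ≤ C.deg x ⊔ p} :=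
    sub_mem (single_mem_supported K 1 (And.intro rfl le_sup_left))
      (hs.map_mem (fun y hy y' h =>
        And.intro (h.1.trans hy.1) (h.2.trans (sup_le_sup_right hy.2 _))) (C.carries_d x))
  have dz : C.d z = 0 := by
    have := map_eq_map_of_mem_supported (f := C.d * s + s * C.d) (g := 1)
      (fun y hy => hds y (by have := hy.1; omega)) (C.carries_d x)
    rw [LinearMap.add_apply, Module.End.mul_apply, Module.End.mul_apply, C.d_d, map_zero, add_zero,
      Module.End.one_apply] at this
    rw [hz, map_sub, this, sub_self]
  have dkz := map_eq_map_of_mem_supported (f := C.d * k + k * C.d) (g := 1)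
    (fun y hy => hdk y hy.2) z_mem
  rw [LinearMap.add_apply, Module.End.mul_apply, Module.End.mul_apply, dz, map_zero, add_zero,
    Module.End.one_apply] at dkz
  refine ⟨k z, hk.map_mem (fun y hy y' h => And.intro (by rw [h.1, hy.1]) h.2) z_mem, ?_⟩
  rw [dkz, hz, sub_add_cancel]

lemma exists_contraction (hp : p ≠ ⊥) (n : ℕ) : ∃ s : Module.End K (C.ι →₀ K),
    Carries (fun x y => C.len y = C.len x + 1 ∧ C.deg y ≤ C.deg x ⊔ p) s ∧
      ∀ x, C.len x < n → (C.d * s + s * C.d) (single x 1) = single x 1 := by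
  classical
  induction n with
  | zero => exact ⟨0, fun x => zero_mem _, by simp⟩
  | succ n ih =>
    obtain ⟨s, hs, hds⟩ := ih
    have := fun x (hx : C.len x = n) => C.exists_coned_contraction hp hs hds hx
    choose! v hv hdv using this
    let s' : Module.End K (C.ι →₀ K) :=
      linearCombination K fun x => if C.len x = n then v x else s (single x 1)
    have s'_single (x) : s' (single x 1) = if C.len x = n then v x else s (single x 1) := by
      simp [s']
    refine ⟨s', fun x => ?_, fun x hx => ?_⟩
    · rw [s'_single]
      split_ifs with h
      exacts [hv x h, hs x]
    · have s'_d : s' (C.d (single x 1)) = s (C.d (single x 1)) :=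
        map_eq_map_of_mem_supported (fun y hy => by
          rw [s'_single, if_neg (by have := hy.1; omega)]) (C.carries_d x)
      rw [LinearMap.add_apply, Module.End.mul_apply, Module.End.mul_apply, s'_d, s'_single]
      split_ifs with h
      exacts [hdv x h, hds x (by omega)]

end Contraction

variable [BoundedOrder L] (C : ConeFilteredComplex K L)

/-- The tensor square of `C`, as a double complex. -/
abbrev Double : Type := (C.ι →₀ K) ⊗[K] (C.ι →₀ K)

/-- The differential of the first tensor factor. -/
def dh : Module.End K C.Double := C.d.rTensor _

/-- The differential of the second tensor factor. -/
def dv : Module.End K C.Double := C.d.lTensor _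

/-- The subcomplex of the double complex spanned by the `x ⊗ y` with `deg x ⊔ deg y ≠ ⊤`. -/
def low : Submodule K C.Double := tensorSpan fun x y => C.deg x ⊔ C.deg y ≠ ⊤

lemma dv_rTensor (f : Module.End K (C.ι →₀ K)) (u : C.Double) :
    C.dv (f.rTensor _ u) = f.rTensor _ (C.dv u) :=
  LinearMap.congr_fun ((LinearMap.lTensor_comp_rTensor ..).trans
    (LinearMap.rTensor_comp_lTensor ..).symm) u

lemma dh_dv (u : C.Double) : C.dh (C.dv u) = C.dv (C.dh u) :=
  (C.dv_rTensor C.d u).symm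

lemma dh_dh (u : C.Double) : C.dh (C.dh u) = 0 := by
  rw [dh, ← Module.End.mul_apply, ← LinearMap.rTensor_mul, C.d_mul_d, LinearMap.rTensor_zero,
    LinearMap.zero_apply]

lemma dv_dv (u : C.Double) : C.dv (C.dv u) = 0 := by
  rw [dv, ← Module.End.mul_apply, ← LinearMap.lTensor_mul, C.d_mul_d, LinearMap.lTensor_zero,
    LinearMap.zero_apply]

lemma comm_dh (u : C.Double) :
    TensorProduct.comm K _ _ (C.dh u) = C.dv (TensorProduct.comm K _ _ u) :=
  LinearMap.congr_fun (TensorProduct.ext' (g := (TensorProduct.comm K _ _).toLinearMap ∘ₗ C.dh)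
    (h := C.dv ∘ₗ (TensorProduct.comm K _ _).toLinearMap) fun _ _ => rfl) u

lemma comm_dv (u : C.Double) :
    TensorProduct.comm K _ _ (C.dv u) = C.dh (TensorProduct.comm K _ _ u) := by
  obtain ⟨v, rfl⟩ := (TensorProduct.comm K (C.ι →₀ K) (C.ι →₀ K)).surjective u
  rw [← comm_dh, TensorProduct.comm_comm, TensorProduct.comm_comm]

lemma comm_mem_low {u : C.Double} (hu : u ∈ C.low) : TensorProduct.comm K _ _ u ∈ C.low := by
  simpa only [low, sup_comm] using comm_mem_tensorSpan hu

lemma rTensor_mem_low {f : Module.End K (C.ι →₀ K)}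
    (hf : Carries (fun x y => C.deg y ≤ C.deg x) f) {u : C.Double} (hu : u ∈ C.low) :
    f.rTensor _ u ∈ C.low :=
  hf.rTensor_mem (fun _ _ _ h hx htop => h (top_unique (htop.ge.trans (sup_le_sup_right hx _)))) hu

lemma dh_mem_low {u : C.Double} (hu : u ∈ C.low) : C.dh u ∈ C.low :=
  C.rTensor_mem_low (C.carries_d.mono fun _ _ h => h.2) hu

lemma dv_mem_low {u : C.Double} (hu : u ∈ C.low) : C.dv u ∈ C.low := by
  have h := C.comm_mem_low (C.dh_mem_low (C.comm_mem_low hu))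
  rwa [comm_dh, TensorProduct.comm_comm] at h

lemma exists_column_contraction (n : ℕ) : ∃ s : Module.End K C.Double,
    (∀ {R R' : C.ι → C.ι → Prop},
      (∀ x y y', R x y → C.len y' = C.len y + 1 → C.deg y' ≤ C.deg y ⊔ C.deg x → R' x y') →
        ∀ u ∈ tensorSpan R, s u ∈ tensorSpan R') ∧
      ∀ u ∈ tensorSpan fun x y => C.len x ≠ 0 ∧ C.len y < n, C.dv (s u) + s (C.dv u) = u := by
  have contraction (x : C.ι) : ∃ s : Module.End K (C.ι →₀ K),
      Carries (fun y y' => C.len y' = C.len y + 1 ∧ C.deg y' ≤ C.deg y ⊔ C.deg x) s ∧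
        (C.len x ≠ 0 → ∀ y, C.len y < n → (C.d * s + s * C.d) (single y 1) = single y 1) := by
    by_cases hx : C.len x = 0
    · exact ⟨0, fun y => zero_mem _, absurd hx⟩
    · obtain ⟨s, hs, hds⟩ := C.exists_contraction (C.deg_ne_bot x hx) n
      exact ⟨s, hs, fun _ => hds⟩
  choose s hs hds using contraction
  let S : Module.End K C.Double := TensorProduct.lift <| linearCombination K fun x =>
    (TensorProduct.mk K (C.ι →₀ K) (C.ι →₀ K) (single x 1)).comp (s x)
  have S_tmul (x : C.ι) (b : C.ι →₀ K) : S (single x 1 ⊗ₜ b) = single x 1 ⊗ₜ s x b := by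
    simp [S]
  refine ⟨S, fun h u hu => map_mem_of_mem_tensorSpan (fun x y hxy => ?_) hu, fun u hu => ?_⟩
  · rw [S_tmul]
    exact tmul_mem_tensorSpan (S := {x})
      (fun _ hx y' hy' => hx ▸ h x y y' hxy hy'.1 hy'.2) (single_mem_supported K 1 rfl) (hs x y)
  · refine LinearMap.eqOn_span (f := C.dv ∘ₗ S + S ∘ₗ C.dv) (g := LinearMap.id) ?_ hu
    rintro _ ⟨x, y, ⟨hx, hy⟩, rfl⟩
    have := hds x hx y hy
    simp only [LinearMap.add_apply, Module.End.mul_apply] at this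
    simp [dv, S_tmul, ← TensorProduct.tmul_add, this]

lemma column_exact {A : C.ι → Prop} (hA : ∀ x, A x → C.len x ≠ 0) {l : ℕ} {u : C.Double}
    (hu : u ∈ tensorSpan fun x y => A x ∧ C.len y = l) (hdu : C.dv u ∈ C.low) :
    ∃ w ∈ tensorSpan fun x y => A x ∧ C.len y = l + 1, u - C.dv w ∈ C.low := by
  obtain ⟨s, hs, hds⟩ := C.exists_column_contraction (l + 1)
  refine ⟨s u, hs (fun x y y' h hl _ => ⟨h.1, hl.trans (congrArg (· + 1) h.2)⟩) u hu, ?_⟩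
  rw [← eq_sub_iff_add_eq'.2 (hds u (tensorSpan_mono (fun x y h => ⟨hA x h.1, by omega⟩) hu))]
  refine hs (fun x y y' h _ hle htop => h (top_unique ?_)) _ hdu
  exact htop.ge.trans (sup_le le_sup_left (hle.trans_eq (sup_comm _ _)))

lemma row_exact {A : C.ι → Prop} (hA : ∀ y, A y → C.len y ≠ 0) {j : ℕ} {u : C.Double}
    (hu : u ∈ tensorSpan fun x y => C.len x = j ∧ A y) (hdu : C.dh u ∈ C.low) :
    ∃ w ∈ tensorSpan fun x y => C.len x = j + 1 ∧ A y, u - C.dh w ∈ C.low := by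
  obtain ⟨w, hw, huw⟩ := C.column_exact hA (l := j) (u := TensorProduct.comm K _ _ u)
    (by simpa only [and_comm] using comm_mem_tensorSpan hu)
    (by simpa only [comm_dh] using C.comm_mem_low hdu)
  refine ⟨TensorProduct.comm K _ _ w, by simpa only [and_comm] using comm_mem_tensorSpan hw, ?_⟩
  simpa only [map_sub, TensorProduct.comm_comm, comm_dv] using C.comm_mem_low huw

/-- `u` is a bidegree `(j, l)` chain of the double complex whose factors have filtration degrees
in `U` and `V`, which modulo `low` is a cycle for both differentials and not of the form
`dh (dv ξ)`. -/
structure IsEssential (U V : LowerSet L) (j l : ℕ) (u : C.Double) : Prop where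
  mem : u ∈ tensorSpan fun x y => (C.len x = j ∧ C.deg x ∈ U) ∧ C.len y = l ∧ C.deg y ∈ V
  dh_mem : C.dh u ∈ C.low
  dv_mem : C.dv u ∈ C.low
  not_mem : ∀ ξ ∈ tensorSpan fun x y => C.len x = j + 1 ∧ C.len y = l + 1,
    u - C.dh (C.dv ξ) ∉ C.low

namespace IsEssential

variable {C} {U V : LowerSet L} {j l : ℕ} {u : C.Double}

lemma comm (hu : C.IsEssential U V j l u) :
    C.IsEssential V U l j (TensorProduct.comm K _ _ u) where
  mem := by simpa only [and_comm] using comm_mem_tensorSpan hu.mem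
  dh_mem := by simpa only [comm_dv] using C.comm_mem_low hu.dv_mem
  dv_mem := by simpa only [comm_dh] using C.comm_mem_low hu.dh_mem
  not_mem ξ hξ h := by
    refine hu.not_mem (TensorProduct.comm K _ _ ξ)
      (by simpa only [and_comm] using comm_mem_tensorSpan hξ) ?_
    simpa only [map_sub, TensorProduct.comm_comm, comm_dh, comm_dv, dh_dv] using C.comm_mem_low h

lemma exists_sup_eq_top (hu : C.IsEssential U V j l u) : ∃ p ∈ U, ∃ q ∈ V, p ⊔ q = ⊤ := by
  by_contra! h
  refine hu.not_mem 0 (zero_mem _) ?_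
  rw [map_zero, map_zero, sub_zero]
  exact tensorSpan_mono (fun x y hxy => h _ hxy.1.2 _ hxy.2.2) hu.mem

lemma zigzag (hu : C.IsEssential U ⊤ (j + 1) l u) : ∃ u', C.IsEssential U ⊤ j (l + 1) u' := by
  obtain ⟨w, hw, huw⟩ := C.column_exact (A := fun x => C.len x = j + 1 ∧ C.deg x ∈ U)
    (fun x hx => by simp [hx.1]) (tensorSpan_mono (fun x y h => ⟨h.1, h.2.1⟩) hu.mem) hu.dv_mem
  refine ⟨C.dh w, ?_, by simp [dh_dh], ?_, fun ξ hξ hlow => ?_⟩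
  · refine C.carries_d.rTensor_mem (fun x x' y h hx' => ?_) hw
    exact ⟨⟨Nat.succ_injective (hx'.1.trans h.1.1), U.lower hx'.2 h.1.2⟩, h.2, trivial⟩
  · have := sub_mem hu.dh_mem (C.dh_mem_low huw)
    rwa [map_sub, sub_sub_cancel, dh_dv] at this
  · have hdξ : C.dv ξ ∈ tensorSpan fun x y => C.len x = j + 1 ∧ C.len y = l + 1 :=
      C.carries_d.lTensor_mem (fun x y y' h hy' => ⟨h.1, by omega⟩) hξ
    obtain ⟨ζ, hζ, hlow'⟩ := C.row_exact (A := fun y => C.len y = l + 1) (by simp +contextual)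
      (sub_mem (tensorSpan_mono (fun x y h => ⟨h.1.1, h.2⟩) hw) hdξ) (by rwa [map_sub])
    refine hu.not_mem ζ hζ ?_
    have := add_mem huw (C.dv_mem_low hlow')
    rwa [map_sub, map_sub, dv_dv, sub_zero, ← dh_dv, sub_add_sub_cancel] at this

lemma zigzag_iterate (k : ℕ) {u : C.Double} (hu : C.IsEssential U ⊤ (j + k) l u) :
    ∃ u', C.IsEssential U ⊤ j (l + k) u' := by
  induction k generalizing l u with
  | zero => exact ⟨u, hu⟩
  | succ k ih =>
    obtain ⟨v, hv⟩ := hu.zigzag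
    obtain ⟨u', hu'⟩ := ih hv
    exact ⟨u', by rwa [← Nat.add_assoc, Nat.add_right_comm]⟩

lemma deform {f : Module.End K (C.ι →₀ K)} (hf : C.toFilteredComplex.IsDeformation f)
    {W : LowerSet L}
    (hfW : ∀ x, C.len x = j → f (single x 1) ∈ supported K K {y | C.deg y ∈ W})
    (hu : C.IsEssential U V j l u) : C.IsEssential W V j l (f.rTensor _ u) where
  mem := by
    refine map_mem_of_mem_tensorSpan (fun x y h => ?_) hu.mem
    rw [LinearMap.rTensor_tmul]
    refine tmul_mem_tensorSpan (S := {x' | C.len x' = C.len x ∧ C.deg x' ≤ C.deg x} ∩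
      {x' | C.deg x' ∈ W}) (T := {y}) ?_ ((supported_inter _ _).ge
        ⟨hf.carries x, hfW x h.1.1⟩) (single_mem_supported K 1 rfl)
    rintro x' hx' _ rfl
    exact ⟨⟨hx'.1.1.trans h.1.1, hx'.2⟩, h.2⟩
  dh_mem := by
    rw [dh, ← Module.End.mul_apply, ← LinearMap.rTensor_mul, ← hf.commute_d.eq,
      LinearMap.rTensor_mul]
    exact C.rTensor_mem_low (hf.carries.mono fun _ _ h => h.2) hu.dh_mem
  dv_mem := by
    rw [dv_rTensor]
    exact C.rTensor_mem_low (hf.carries.mono fun _ _ h => h.2) hu.dv_mem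
  not_mem ξ hξ hlow := by
    obtain ⟨H, hH, rfl⟩ := hf
    have hHlow {v : C.Double} (hv : v ∈ C.low) : H.rTensor _ v ∈ C.low :=
      C.rTensor_mem_low (hH.mono fun _ _ h => h.2) hv
    obtain ⟨ζ, hζ, hζlow⟩ := C.column_exact (A := fun x => C.len x = j + 1) (l := l)
      (u := H.rTensor _ u) (by simp +contextual)
      (hH.rTensor_mem (fun x x' y h h' => ⟨h'.1.trans (congrArg (· + 1) h.1.1), h.2.1⟩) hu.mem)
      (by rw [dv_rTensor]; exact hHlow hu.dv_mem)
    refine hu.not_mem (ξ + ζ) (add_mem hξ hζ) ?_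
    have split : u - C.dh (C.dv (ξ + ζ)) =
        (1 - (C.d * H + H * C.d)).rTensor _ u - C.dh (C.dv ξ) +
          (C.dh (H.rTensor _ u - C.dv ζ) + H.rTensor _ (C.dh u)) := by
      simp only [dh, LinearMap.rTensor_sub, LinearMap.rTensor_add, LinearMap.rTensor_mul,
        Module.End.one_eq_id, LinearMap.rTensor_id, LinearMap.sub_apply, LinearMap.add_apply,
        LinearMap.id_apply, Module.End.mul_apply, map_add, map_sub]
      abel
    rw [split]
    exact add_mem hlow (add_mem (C.dh_mem_low hζlow) (hHlow hu.dh_mem))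

lemma exists_lowerClosure [Finite L] (hu : C.IsEssential U V j l u) :
    ∃ u', C.IsEssential (lowerClosure {p | C.GrHomologyNontrivial j p}) V j l u' :=
  have ⟨_, hf, hfW⟩ := C.exists_isDeformation j
  ⟨_, hu.deform hf hfW⟩

end IsEssential

lemma d_single_base : C.d (single C.base 1) = 0 := by
  have hempty : {y | C.len y + 1 = C.len C.base ∧ C.deg y ≤ C.deg C.base} = ∅ := by
    simp [C.len_base]
  simpa only [hempty, supported_empty, Submodule.mem_bot] using C.carries_d C.base

lemma mem_range_grD_of_sub_mem_low {z : C.ι →₀ K} (hz : z ∈ supported K K {x | C.deg x = ⊤})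
    {η : C.Double} (h : z ⊗ₜ single C.base 1 - C.dh η ∈ C.low) :
    z ∈ LinearMap.range C.grD := by
  let φ : C.Double →ₗ[K] (C.ι →₀ K) :=
    (TensorProduct.rid K _).toLinearMap ∘ₗ (lapply C.base).lTensor _
  have hφz : φ (z ⊗ₜ single C.base 1) = z := by simp [φ]
  have φ_dh : φ (C.dh η) = C.d (φ η) :=
    LinearMap.congr_fun (TensorProduct.ext' (g := φ ∘ₗ C.dh) (h := C.d ∘ₗ φ)
      fun _ _ => by simp [φ, dh]) η
  have φ_low : φ (z ⊗ₜ single C.base 1 - C.dh η) ∈ supported K K {x | C.deg x = ⊤}ᶜ := by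
    refine map_mem_of_mem_tensorSpan (fun x y hxy => ?_) h
    by_cases hy : y = C.base
    · have hx : C.deg x ≠ ⊤ := fun hx => hxy (by simp [hx])
      simpa [φ, hy] using single_mem_supported K (1 : K) hx
    · simp [φ, single_eq_of_ne' hy]
  have lower : (C.d - C.grD) (φ η) ∈ supported K K {x | C.deg x = ⊤}ᶜ :=
    C.carries_d_sub_grD.map_mem (S := Set.univ) (fun _ _ _ h => h.ne_top) (by simp)
  obtain ⟨w, -, hw⟩ := Carries.exists_mem_supported_map_eq (S := {x | C.deg x = ⊤})
    (C.carries_grD.mono fun x y h => by simp [h.2]) hz (w := φ η)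
    (by simpa [φ_dh, hφz] using add_mem φ_low lower)
  exact ⟨w, hw⟩

lemma exists_isEssential_of_grHomologyNontrivial_top {m : ℕ} (h : C.GrHomologyNontrivial m ⊤) :
    ∃ u, C.IsEssential ⊤ ⊤ m 0 u := by
  obtain ⟨z, hz, hdz, hne⟩ := h
  refine ⟨z ⊗ₜ single C.base 1, ?_, ?_, ?_, fun ξ _ hlow =>
    hne (C.mem_range_grD_of_sub_mem_low (supported_mono (fun x hx => hx.2) hz) hlow)⟩
  · refine tmul_mem_tensorSpan (T := {C.base}) ?_ hz (single_mem_supported K 1 rfl)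
    rintro x hx _ rfl
    exact ⟨⟨hx.1, trivial⟩, C.len_base, trivial⟩
  · have hd : C.d z ∈ supported K K {x | C.deg x < ⊤} := by
      have := C.carries_d_sub_grD.map_mem (T := {x | C.deg x < ⊤})
        (fun x hx y h => h.trans_eq hx.2) hz
      rwa [LinearMap.sub_apply, hdz, sub_zero] at this
    refine tmul_mem_tensorSpan (T := {C.base}) ?_ hd (single_mem_supported K 1 rfl)
    rintro x hx _ rfl
    simpa [C.deg_base] using hx.ne
  · simp [dv, d_single_base]

theorem exists_grHomologyNontrivial_sup_eq_top [Finite L] {m i j : ℕ}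
    (h : C.GrHomologyNontrivial m ⊤) (hi : i ≤ m) (hj : j ≤ m) (hm : m ≤ i + j) :
    ∃ p q, C.GrHomologyNontrivial i p ∧ C.GrHomologyNontrivial j q ∧ p ⊔ q = ⊤ := by
  obtain ⟨u, hu⟩ := C.exists_isEssential_of_grHomologyNontrivial_top h
  obtain ⟨v, hv⟩ := IsEssential.zigzag_iterate (j := i) (m - i) (by rwa [Nat.add_sub_cancel' hi])
  obtain ⟨v', hv'⟩ := hv.exists_lowerClosure
  obtain ⟨w, hw⟩ := IsEssential.zigzag_iterate (j := m - j) (i + j - m)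
    (by rwa [show m - j + (i + j - m) = i by omega])
  rw [show 0 + (m - i) + (i + j - m) = j by omega] at hw
  obtain ⟨w', hw'⟩ := hw.comm.exists_lowerClosure
  obtain ⟨q, ⟨q', hq', hqq'⟩, p, ⟨p', hp', hpp'⟩, hpq⟩ := hw'.exists_sup_eq_top
  exact ⟨p', q', hp', hq', top_unique (hpq.symm.trans_le (sup_comm q p ▸ sup_le_sup hpp' hqq'))⟩

end ConeFilteredComplex

end ConeFilteredComplex

section Chains

variable {P : Type} [Preorder P]

/-- Prepending an element to an order chain. -/
def ocons {n : ℕ} (p : P) (c : OChain P n) (h : ∀ i, c.1 i < p) : OChain P (n + 1) :=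
  ⟨Fin.cons p c.1, by
    intro i j hij
    cases j using Fin.cases with
    | zero => exact absurd hij (Fin.not_lt_zero i)
    | succ j =>
      cases i using Fin.cases with
      | zero => simpa using h j
      | succ i => simpa using c.2 (Fin.succ_lt_succ_iff.1 hij)⟩

lemma odel_zero_ocons {n : ℕ} (p : P) (c : OChain P n) (h : ∀ i, c.1 i < p) :
    odel P 0 (ocons p c h) = c := by
  apply Subtype.ext
  funext i
  simp [odel, ocons]

lemma odel_succ_ocons {n : ℕ} (p : P) (c : OChain P (n + 1)) (h : ∀ i, c.1 i < p)
    (k : Fin (n + 1)) :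
    odel P k.succ (ocons p c h) = ocons p (odel P k c) fun _ => h _ := by
  apply Subtype.ext
  funext i
  cases i using Fin.cases <;> simp [odel, ocons, Fin.removeNth]

lemma odel_zero_lt {n : ℕ} (c : OChain P (n + 1)) (i : Fin n) : (odel P 0 c).1 i < c.1 0 :=
  c.2 (by simp)

lemma ocons_odel_zero {n : ℕ} (c : OChain P (n + 1)) :
    ocons (c.1 0) (odel P 0 c) (odel_zero_lt c) = c := by
  apply Subtype.ext
  funext i
  cases i using Fin.cases <;> simp [odel, ocons]

lemma cbdry_single {n : ℕ} (c : OChain P (n + 1)) : cbdry K P n (single c 1) =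
    ∑ k : Fin (n + 1), ((-1 : K) ^ (k : ℕ)) • single (odel P k c) 1 := by
  simp [cbdry]

variable (P) in
/-- The finite chains of `P`, of all lengths; they form a basis of its augmented chain complex. -/
abbrev FiniteChain : Type := Σ n, OChain P n

namespace FiniteChain

variable (P) in
/-- The empty chain, a basis of the augmentation part of the chain complex. -/
def nil : FiniteChain P := ⟨0, Fin.elim0, fun i => i.elim0⟩

/-- All elements of the chain `c` are smaller than `p`. -/
def IsBelow (c : FiniteChain P) (p : P) : Prop := ∀ i, c.2.1 i < p

lemma IsBelow.mono {c c' : FiniteChain P} {p : P} (h : c.IsBelow p)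
    (hc : Set.range c'.2.1 ⊆ Set.range c.2.1) : c'.IsBelow p :=
  fun i => have ⟨j, hj⟩ := hc ⟨i, rfl⟩; hj ▸ h j

lemma isBelow_nil (p : P) : (nil P).IsBelow p := fun i => i.elim0

/-- The chain obtained from `c` by adding a new largest element `p`. -/
def cons (p : P) (c : FiniteChain P) (h : c.IsBelow p) : FiniteChain P :=
  ⟨c.1 + 1, ocons p c.2 h⟩

@[elab_as_elim]
lemma cons_induction {motive : FiniteChain P → Prop} (nil : motive (nil P))
    (cons : ∀ p c h, motive c → motive (cons p c h)) (c : FiniteChain P) : motive c := by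
  obtain ⟨n, c⟩ := c
  induction n with
  | zero =>
    rwa [show c = (FiniteChain.nil P).2 from Subtype.ext (funext fun i => i.elim0)]
  | succ n ih =>
    rw [← ocons_odel_zero c]
    exact cons _ ⟨n, odel P 0 c⟩ _ (ih _)

lemma isBelow_cons_iff {p q : P} {c : FiniteChain P} {h : c.IsBelow p} :
    (cons p c h).IsBelow q ↔ p < q :=
  ⟨fun hq => hq (0 : Fin (c.1 + 1)), fun hpq i => by
    cases i using Fin.cases with
    | zero => exact hpq
    | succ i => exact (h i).trans hpq⟩

/-- The boundary map of the augmented chain complex of `P`, on all levels at once. -/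
def bdry : Module.End K (FiniteChain P →₀ K) :=
  linearCombination K fun
    | ⟨0, _⟩ => 0
    | ⟨n + 1, c⟩ => lmapDomain K K (Sigma.mk n) (cbdry K P n (single c 1))

lemma bdry_single_zero (c : OChain P 0) : bdry (single ⟨0, c⟩ (1 : K)) = 0 := by
  simp [bdry]

lemma bdry_single_nil : bdry (single (nil P) (1 : K)) = 0 :=
  bdry_single_zero _

lemma bdry_single_succ {n : ℕ} (c : OChain P (n + 1)) : bdry (single ⟨n + 1, c⟩ (1 : K)) =
    ∑ k : Fin (n + 1), ((-1 : K) ^ (k : ℕ)) • single ⟨n, odel P k c⟩ (1 : K) := by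
  have : bdry (single ⟨n + 1, c⟩ (1 : K)) =
      lmapDomain K K (Sigma.mk n) (cbdry K P n (single c 1)) := by simp [bdry]
  rw [this, cbdry_single, map_sum]
  simp only [map_smul, lmapDomain_apply, mapDomain_single]

open Classical in
/-- The cone operator with apex `p`; the junk value on chains that are not below `p` is `0`. -/
def cone (p : P) : Module.End K (FiniteChain P →₀ K) :=
  linearCombination K fun c => if h : c.IsBelow p then single (cons p c h) 1 else 0

lemma cone_single_of_isBelow {p : P} {c : FiniteChain P} (h : c.IsBelow p) :
    cone p (single c (1 : K)) = single (cons p c h) 1 := by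
  simp [cone, h]

lemma cone_single_of_not_isBelow {p : P} {c : FiniteChain P} (h : ¬ c.IsBelow p) :
    cone p (single c (1 : K)) = 0 := by
  simp [cone, h]

lemma bdry_single_cons (p : P) (c : FiniteChain P) (h : c.IsBelow p) :
    bdry (single (cons p c h) (1 : K)) = single c 1 - cone p (bdry (single c 1)) := by
  obtain ⟨n, c⟩ := c
  have hlt : ∀ i, c.1 i < p := h
  change bdry (single ⟨n + 1, ocons p c hlt⟩ 1) = _
  rw [bdry_single_succ, Fin.sum_univ_succ, odel_zero_ocons]
  cases n with
  | zero => simp [bdry_single_zero]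
  | succ n =>
    have hdel (k : Fin (n + 1)) : IsBelow ⟨n, odel P k c⟩ p := fun _ => h _
    simp only [bdry_single_succ, map_sum, map_smul, cone_single_of_isBelow (hdel _), cons,
      odel_succ_ocons, Fin.val_zero, pow_zero, one_smul, Fin.val_succ, pow_succ, mul_neg_one,
      neg_smul, Finset.sum_neg_distrib, sub_eq_add_neg]

lemma bdry_cone {p : P} {v : FiniteChain P →₀ K} (hv : v ∈ supported K K {c | c.IsBelow p}) :
    bdry (cone p v) = v - cone p (bdry v) :=
  map_eq_map_of_mem_supported (f := bdry * cone p) (g := 1 - cone p * bdry)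
    (fun c hc => by simp [cone_single_of_isBelow hc, bdry_single_cons]) hv

lemma carries_bdry :
    Carries (fun x y : FiniteChain P => y.1 + 1 = x.1 ∧ Set.range y.2.1 ⊆ Set.range x.2.1)
      (bdry (K := K)) := by
  rintro ⟨_ | n, c⟩
  · rw [bdry_single_zero]
    exact zero_mem _
  · rw [bdry_single_succ]
    exact sum_mem fun k _ => Submodule.smul_mem _ _
      (single_mem_supported K 1 ⟨rfl, by rintro _ ⟨i, rfl⟩; exact ⟨_, rfl⟩⟩)

lemma bdry_mul_bdry : bdry * bdry = (0 : Module.End K (FiniteChain P →₀ K)) := by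
  ext c : 2
  change bdry (bdry (single c 1)) = 0
  induction c using cons_induction with
  | nil => rw [bdry_single_nil, map_zero]
  | cons p c h ih =>
    have hc : bdry (single c 1) ∈ supported K K {c | c.IsBelow p} :=
      supported_mono (fun y hy => h.mono hy.2) (carries_bdry c)
    rw [bdry_single_cons, map_sub, bdry_cone hc, ih, map_zero, sub_zero, sub_self]

lemma carries_cone (p : P) : Carries (fun x y => y.1 = x.1 + 1 ∧ ∃ c h, y = cons p c h)
    (cone (K := K) p) := fun c => by
  by_cases h : c.IsBelow p
  · rw [cone_single_of_isBelow h]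
    exact single_mem_supported K 1 ⟨rfl, c, h, rfl⟩
  · rw [cone_single_of_not_isBelow h]
    exact zero_mem _

lemma cone_mul_cone (p : P) : cone p * cone p = (0 : Module.End K (FiniteChain P →₀ K)) := by
  ext c : 2
  refine (Submodule.mem_bot K).1 (map_mem_of_mem_supported (f := cone p) ?_ (carries_cone p c))
  rintro _ ⟨-, c, h, rfl⟩
  exact (Submodule.mem_bot K).2
    (cone_single_of_not_isBelow fun h' => (isBelow_cons_iff.1 h').false)

lemma bdry_cone_add_cone_bdry {P : Type} [PartialOrder P] {p : P} {c : FiniteChain P}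
    (hc : ∀ i, c.2.1 i ≤ p) :
    (bdry * cone p + cone p * bdry : Module.End K (FiniteChain P →₀ K)) (single c 1) =
      single c 1 := by
  rw [LinearMap.add_apply, Module.End.mul_apply, Module.End.mul_apply]
  by_cases hlt : c.IsBelow p
  · rw [bdry_cone (single_mem_supported K 1 hlt), sub_add_cancel]
  · induction c using cons_induction with
    | nil => exact absurd (isBelow_nil p) hlt
    | cons q c h =>
      obtain rfl : q = p :=
        (hc (0 : Fin (c.1 + 1))).eq_of_not_lt fun hq => hlt (isBelow_cons_iff.2 hq)
      rw [bdry_single_cons, cone_single_of_not_isBelow hlt, map_zero, zero_add, map_sub,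
        cone_single_of_isBelow h, ← Module.End.mul_apply, cone_mul_cone, LinearMap.zero_apply,
        sub_zero]

end FiniteChain

end Chains

section OrderComplex

open FiniteChain

variable {L : Type} [PartialOrder L] [OrderBot L]

/-- The largest element of a chain of elements above `⊥`, where the empty chain gets `⊥`. -/
def chainTop : FiniteChain (Set.Ioi (⊥ : L)) → L
  | ⟨0, _⟩ => ⊥
  | ⟨_ + 1, c⟩ => c.1 0

lemma chainTop_le_iff {c : FiniteChain (Set.Ioi (⊥ : L))} {p : L} :
    chainTop c ≤ p ↔ ∀ i, (c.2.1 i : L) ≤ p := by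
  obtain ⟨_ | n, c⟩ := c
  · exact ⟨fun _ i => i.elim0, fun _ => bot_le⟩
  · have hle (i : Fin (n + 1)) : c.1 i ≤ c.1 0 := c.2.antitone (Fin.zero_le i)
    exact ⟨fun h i => le_trans (Subtype.coe_le_coe.2 (hle i)) h, fun h => h (0 : Fin (n + 1))⟩

variable (K L) in
/-- The augmented chain complex of the poset `L ∖ {⊥}`, filtered by the largest element of a
chain. -/
abbrev chainComplex : ConeFilteredComplex K L where
  ι := FiniteChain (Set.Ioi (⊥ : L))
  len c := c.1
  deg := chainTop
  d := bdry
  carries_d := carries_bdry.mono fun x y h => ⟨h.1, chainTop_le_iff.2 fun i => by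
    obtain ⟨j, hj⟩ := h.2 ⟨i, rfl⟩
    exact hj ▸ chainTop_le_iff.1 le_rfl j⟩
  d_mul_d := bdry_mul_bdry
  base := nil _
  len_base := rfl
  deg_base := rfl
  deg_ne_bot
    | ⟨0, _⟩, h => absurd rfl h
    | ⟨_ + 1, c⟩, _ => (c.1 0).2.ne'
  exists_cone p hp := ⟨cone ⟨p, bot_lt_iff_ne_bot.2 hp⟩,
    (carries_cone _).mono fun x y ⟨hlen, c, h, hy⟩ => ⟨hlen, hy ▸ le_rfl⟩,
    fun x hx => bdry_cone_add_cone_bdry (chainTop_le_iff.1 hx)⟩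

variable {p : Set.Ioi (⊥ : L)} {n : ℕ}

/-- The chain in the open interval `(⊥, p)` as a chain in `L ∖ {⊥}`. -/
def ofIoo (c : OChain (Set.Ioo ⊥ (p : L)) n) : OChain (Set.Ioi (⊥ : L)) n :=
  ⟨fun i => ⟨c.1 i, (c.1 i).2.1⟩, fun _ _ h => c.2 h⟩

lemma isBelow_ofIoo (c : OChain (Set.Ioo ⊥ (p : L)) n) : IsBelow ⟨n, ofIoo c⟩ p :=
  fun i => (c.1 i).2.2

/-- The chain with largest element `p` given by a chain in the open interval `(⊥, p)`. -/
def apexChain (c : OChain (Set.Ioo ⊥ (p : L)) n) : FiniteChain (Set.Ioi (⊥ : L)) :=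
  cons p ⟨n, ofIoo c⟩ (isBelow_ofIoo c)

lemma apexChain_injective :
    Function.Injective (apexChain : OChain (Set.Ioo ⊥ (p : L)) n → _) := by
  intro c c' h
  have hcons : ocons p (ofIoo c) (isBelow_ofIoo c) = ocons p (ofIoo c') (isBelow_ofIoo c') :=
    sigma_mk_injective h
  refine Subtype.ext (funext fun i => Subtype.ext ?_)
  exact congrArg (fun e : OChain (Set.Ioi (⊥ : L)) (n + 1) => (e.1 i.succ : L)) hcons

lemma range_apexChain : Set.range (apexChain : OChain (Set.Ioo ⊥ (p : L)) n → _) =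
    {x | x.1 = n + 1 ∧ chainTop x = (p : L)} := by
  refine subset_antisymm (by rintro _ ⟨c, rfl⟩; exact ⟨rfl, rfl⟩) ?_
  rintro ⟨_ | n, c⟩ ⟨hlen, hdeg⟩
  · cases hlen
  · obtain rfl := Nat.succ_injective hlen
    obtain rfl : c.1 0 = p := Subtype.ext hdeg
    exact ⟨⟨fun i => ⟨(odel _ 0 c).1 i, ((odel _ 0 c).1 i).2, odel_zero_lt c i⟩,
      fun _ _ h => (odel _ 0 c).2 h⟩, congrArg (Sigma.mk _) (ocons_odel_zero c)⟩

lemma grD_single_apexChain (c : OChain (Set.Ioo ⊥ (p : L)) n) :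
    (chainComplex K L).grD (single (apexChain c) 1) =
      -cone p (bdry (single ⟨n, ofIoo c⟩ 1)) := by
  refine (chainComplex K L).grD_single_eq (neg_mem ?_) ?_
  · refine (carries_cone p).map_mem (S := Set.univ) ?_ (by rw [supported_univ]; trivial)
    rintro _ - _ ⟨-, c, h, rfl⟩
    rfl
  · rw [show (chainComplex K L).d = bdry from rfl, apexChain, bdry_single_cons, sub_neg_eq_add,
      sub_add_cancel]
    refine single_mem_supported K 1 (show chainTop ⟨n, ofIoo c⟩ < p from ?_)
    cases n with
    | zero => exact p.2
    | succ n => exact (c.1 0).2.2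

lemma grD_lmapDomain_apexChain_zero (v : CGrp K (Set.Ioo ⊥ (p : L)) 0) :
    (chainComplex K L).grD (lmapDomain K K apexChain v) = 0 := by
  suffices h : (chainComplex K L).grD ∘ₗ lmapDomain K K apexChain = 0 from LinearMap.congr_fun h v
  ext c : 2
  change (chainComplex K L).grD (mapDomain apexChain (single c 1)) = 0
  rw [mapDomain_single, grD_single_apexChain, bdry_single_zero, map_zero, neg_zero]

lemma grD_lmapDomain_apexChain_succ (v : CGrp K (Set.Ioo ⊥ (p : L)) (n + 1)) :
    (chainComplex K L).grD (lmapDomain K K apexChain v) =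
      lmapDomain K K apexChain ((-cbdry K _ n) v) := by
  suffices h : (chainComplex K L).grD ∘ₗ lmapDomain K K apexChain =
      lmapDomain K K apexChain ∘ₗ (-cbdry K _ n) from LinearMap.congr_fun h v
  have hdel (c : OChain (Set.Ioo ⊥ (p : L)) (n + 1)) (k : Fin (n + 1)) :
      cone p (single ⟨n, odel _ k (ofIoo c)⟩ (1 : K)) = single (apexChain (odel _ k c)) 1 :=
    cone_single_of_isBelow (isBelow_ofIoo (odel _ k c))
  ext c : 2
  change (chainComplex K L).grD (mapDomain apexChain (single c 1)) =
    lmapDomain K K apexChain (-cbdry K _ n (single c 1))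
  rw [mapDomain_single, grD_single_apexChain, bdry_single_succ, cbdry_single]
  simp only [map_neg, map_sum, map_smul, hdel, lmapDomain_apply, mapDomain_single]

lemma grD_lmapDomain_apexChain_eq_zero_iff {v : CGrp K (Set.Ioo ⊥ (p : L)) n} :
    (chainComplex K L).grD (lmapDomain K K apexChain v) = 0 ↔ v ∈ cyclesAt K _ n := by
  cases n with
  | zero => exact iff_of_true (grD_lmapDomain_apexChain_zero v) trivial
  | succ n =>
    rw [grD_lmapDomain_apexChain_succ, LinearMap.neg_apply, map_neg, neg_eq_zero,
      lmapDomain_apply]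
    exact (map_eq_zero_iff (mapDomain.addMonoidHom _) (mapDomain_injective apexChain_injective))

lemma lmapDomain_apexChain_mem_range_grD_iff {v : CGrp K (Set.Ioo ⊥ (p : L)) n} :
    lmapDomain K K apexChain v ∈ LinearMap.range (chainComplex K L).grD ↔
      v ∈ boundariesIn K _ n := by
  rw [boundariesIn, ← LinearMap.range_neg (cbdry K _ n)]
  refine Carries.lmapDomain_mem_range_iff apexChain_injective ?_ grD_lmapDomain_apexChain_succ
  refine (chainComplex K L).carries_grD.mono fun x y h => ?_
  obtain ⟨hlen : y.1 + 1 = x.1, hdeg : chainTop y = chainTop x⟩ := h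
  rw [range_apexChain, range_apexChain]
  exact and_congr (hlen ▸ Nat.succ_inj) (hdeg ▸ Iff.rfl)

lemma rHomNontrivial_Ioo_iff :
    RHomNontrivial K (Set.Ioo ⊥ (p : L)) n ↔
      (chainComplex K L).GrHomologyNontrivial (n + 1) (p : L) := by
  rw [RHomNontrivial, SetLike.not_le_iff_exists, FilteredComplex.GrHomologyNontrivial,
    ← range_apexChain, ← Set.image_univ, ← lmapDomain_supported, supported_univ]
  constructor
  · rintro ⟨v, hv, hv'⟩
    exact ⟨_, ⟨v, trivial, rfl⟩, grD_lmapDomain_apexChain_eq_zero_iff.2 hv,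
      mt lmapDomain_apexChain_mem_range_grD_iff.1 hv'⟩
  · rintro ⟨_, ⟨v, -, rfl⟩, hv, hv'⟩
    exact ⟨v, grD_lmapDomain_apexChain_eq_zero_iff.1 hv,
      mt lmapDomain_apexChain_mem_range_grD_iff.2 hv'⟩

end OrderComplex

lemma isSynor_iff {L : Type} [Lattice L] [OrderBot L] {n : ℕ} {p : L} :
    IsSynor K L n p ↔ (chainComplex K L).GrHomologyNontrivial (n + 1) p := by
  constructor
  · rintro ⟨hp, h⟩
    exact (rHomNontrivial_Ioo_iff (p := ⟨p, bot_lt_iff_ne_bot.2 hp⟩)).1 h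
  · intro h
    have hp := (chainComplex K L).ne_bot_of_grHomologyNontrivial n.succ_ne_zero h
    exact ⟨hp, (rHomNontrivial_Ioo_iff (p := ⟨p, bot_lt_iff_ne_bot.2 hp⟩)).2 h⟩

end

/-- Let `L` be a finite lattice with `0̂ ≠ 1̂`, let `i₁, i₂ ≥ 1` and
`0 ≤ k ≤ min{i₁, i₂}`.  If `1̂` is an `(i₁+i₂-k-1)`-synor, then there are an
`(i₁-1)`-synor `x` and an `(i₂-1)`-synor `y` with `x ⊔ y = 1̂`. -/
theorem synor_join_decomposition
    (L : Type) [Lattice L] [BoundedOrder L] [Fintype L] (hL : (⊥ : L) ≠ ⊤)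
    (i₁ i₂ k : ℕ) (hi₁ : 1 ≤ i₁) (hi₂ : 1 ≤ i₂) (hk : k ≤ min i₁ i₂)
    (h : IsSynor K L (i₁ + i₂ - k - 1) (⊤ : L)) :
    ∃ x y : L, IsSynor K L (i₁ - 1) x ∧ IsSynor K L (i₂ - 1) y ∧ x ⊔ y = ⊤ := by
  obtain ⟨j₁, rfl⟩ : ∃ j₁, i₁ = j₁ + 1 := Nat.exists_eq_add_of_le' hi₁
  obtain ⟨j₂, rfl⟩ : ∃ j₂, i₂ = j₂ + 1 := Nat.exists_eq_add_of_le' hi₂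
  obtain ⟨hk₁, hk₂⟩ := le_min_iff.1 hk
  obtain ⟨x, y, hx, hy, hxy⟩ :=
    (chainComplex K L).exists_grHomologyNontrivial_sup_eq_top (isSynor_iff.1 h)
      (i := j₁ + 1) (j := j₂ + 1) (by omega) (by omega) (by omega)
  exact ⟨x, y, isSynor_iff.2 hx, isSynor_iff.2 hy, hxy⟩

end
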